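/- Let χ : ℝ → ℝ be smooth with χ supported in {y : |y| > β/20}, χ(y) = −1 for y ≤ −β/10, and χ(y) = 1 for y ≥ β/10. Then for every ε > 0 there exist constants C > 0 and λ₀ > 0 (depending on ε, χ, α, β) such that for every real Dirichlet quasimode datum (u, λ, f) on the stadium S with λ ≥ λ₀, λ² ∫_{∂S ∩ W} w² χ(y) (∂_y u)(∂_N u) dl ≤ C λ⁸ ‖u‖²_{L²(W)} + ε ∫_S (∂_x u)² dA + C ‖f‖²_{L²(S)}, where ‖u‖_{L²(W)} is the L² norm of u over the wings W. (Note that since u vanishes on ∂S, on ∂S ∩ W one has ∂_y u = (sin θ) ∂_N u, so the integrand on the left equals χ(β sin θ) sin θ · w² (∂_N u)² ≥ 0.) -/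

import Mathlib

open MeasureTheory Real Set Filter

noncomputable section

/-- Partial derivative in the first (x) variable. -/
def pdx (u : ℝ × ℝ → ℝ) (p : ℝ × ℝ) : ℝ := deriv (fun t => u (t, p.2)) p.1

/-- Partial derivative in the second (y) variable. -/
def pdy (u : ℝ × ℝ → ℝ) (p : ℝ × ℝ) : ℝ := deriv (fun t => u (p.1, t)) p.2

/-- The positive Laplacian `Δu = -u_xx - u_yy`. -/
def lap (u : ℝ × ℝ → ℝ) (p : ℝ × ℝ) : ℝ := -(pdx (pdx u) p) - (pdy (pdy u) p)

/-- The central rectangle `R = [-α,α] × [-β,β]`. -/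
def Rect (α β : ℝ) : Set (ℝ × ℝ) := Icc (-α) α ×ˢ Icc (-β) β

/-- The wings `W = W₊ ∪ W₋`, two half-discs of radius β centered at `(±α, 0)`. -/
def Wings (α β : ℝ) : Set (ℝ × ℝ) :=
  {p | (p.1 - α) ^ 2 + p.2 ^ 2 ≤ β ^ 2 ∧ α ≤ p.1} ∪
  {p | (p.1 + α) ^ 2 + p.2 ^ 2 ≤ β ^ 2 ∧ p.1 ≤ -α}

/-- The Bunimovich stadium `S = R ∪ W`. -/
def Stadium (α β : ℝ) : Set (ℝ × ℝ) := Rect α β ∪ Wings α β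

/-- The boundary `∂S`: two horizontal segments and two semicircles. -/
def StadiumBoundary (α β : ℝ) : Set (ℝ × ℝ) :=
  {p | |p.1| ≤ α ∧ (p.2 = β ∨ p.2 = -β)} ∪
  {p | (|p.1| - α) ^ 2 + p.2 ^ 2 = β ^ 2 ∧ α ≤ |p.1|}

/-- Boundary integral `∫_{∂S} g dl` of an integrand `g` depending on the boundary point
and the outward unit normal at that point. -/
def bdryInt (α β : ℝ) (g : ℝ × ℝ → ℝ × ℝ → ℝ) : ℝ :=
  (∫ x in (-α)..α, (g (x, β) (0, 1) + g (x, -β) (0, -1))) +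
  β * ∫ θ in (-(π / 2))..(π / 2),
    (g (α + β * cos θ, β * sin θ) (cos θ, sin θ) +
     g (-(α + β * cos θ), β * sin θ) (-cos θ, sin θ))

/-- Boundary integral `∫_{∂S ∩ W} g dl` over the two semicircles only. -/
def bdryIntW (α β : ℝ) (g : ℝ × ℝ → ℝ × ℝ → ℝ) : ℝ :=
  β * ∫ θ in (-(π / 2))..(π / 2),
    (g (α + β * cos θ, β * sin θ) (cos θ, sin θ) +
     g (-(α + β * cos θ), β * sin θ) (-cos θ, sin θ))

/-- The normal derivative `∂_N u = n₁ ∂_x u + n₂ ∂_y u` at a boundary point `p`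
with outward unit normal `n`. -/
def nderiv (u : ℝ × ℝ → ℝ) (p n : ℝ × ℝ) : ℝ := n.1 * pdx u p + n.2 * pdy u p

/-- A real Dirichlet quasimode datum `(u, λ, f)` on the stadium: `λ > 0`, `u` smooth on a
neighborhood of `S`, `u = 0` on `∂S`, and `(Δ - λ²) u = f` on `S`. -/
structure QMDatum (α β : ℝ) where
  u : ℝ × ℝ → ℝ
  lam : ℝ
  f : ℝ × ℝ → ℝ
  lam_pos : 0 < lam
  smooth : ∃ V : Set (ℝ × ℝ), IsOpen V ∧ Stadium α β ⊆ V ∧ ContDiffOn ℝ (⊤ : ℕ∞) u V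
  dirichlet : ∀ p ∈ StadiumBoundary α β, u p = 0
  eqn : ∀ p ∈ Stadium α β, lap u p - lam ^ 2 * u p = f p

/-! On the right wing, apply the divergence theorem to the Rellich field
`2 (V · ∇u) ∇u - (|∇u|² - λ² u²) V` with `V = (0, w² χ(y))`. Nothing flows through the flat
side, where `w = 0`, and on the arc the gradient of `u` is normal because `u` vanishes there, so the
flux is `w² χ(y) (∂_y u) (∂_N u)`. In the interior every gradient term carries a factor `w²`
except the cross term `w χ (∂_x u) (∂_y u)`, which costs `ε (∂_x u)²` by completing the square;
what remains is bounded by `λ⁴ ∫ w² |∇u|²`. Testing the equation against the multiplier `w² u`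
bounds this in turn by `λ⁸ ‖u‖²` and `‖f‖²`. The left wing follows by reflection. -/

section PartialDerivatives

variable {u a : ℝ × ℝ → ℝ} {p : ℝ × ℝ}

lemma hasDerivAt_pdx (h : DifferentiableAt ℝ u p) :
    HasDerivAt (fun t => u (t, p.2)) (pdx u p) p.1 :=
  (h.comp (f := fun t => (t, p.2)) p.1 (by fun_prop)).hasDerivAt

lemma hasDerivAt_pdy (h : DifferentiableAt ℝ u p) :
    HasDerivAt (fun t => u (p.1, t)) (pdy u p) p.2 :=
  (h.comp (f := fun t => (p.1, t)) p.2 (by fun_prop)).hasDerivAt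

lemma pdx_eq_fderiv (h : DifferentiableAt ℝ u p) : pdx u p = fderiv ℝ u p (1, 0) :=
  (h.hasFDerivAt.comp_hasDerivAt (f := fun t => (t, p.2)) p.1
    ((hasDerivAt_id p.1).prodMk (hasDerivAt_const p.1 p.2))).deriv

lemma pdy_eq_fderiv (h : DifferentiableAt ℝ u p) : pdy u p = fderiv ℝ u p (0, 1) :=
  (h.hasFDerivAt.comp_hasDerivAt (f := fun t => (p.1, t)) p.2
    ((hasDerivAt_const p.2 p.1).prodMk (hasDerivAt_id p.2))).deriv

lemma eventually_differentiableAt {n : WithTop ℕ∞} (h : ContDiffAt ℝ n u p)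
    (hn : 1 ≤ n) : ∀ᶠ q in nhds p, DifferentiableAt ℝ u q :=
  ((h.of_le hn).eventually (by simp)).mono fun _ hq => hq.differentiableAt one_ne_zero

lemma pdx_eventuallyEq_fderiv {n : WithTop ℕ∞} (h : ContDiffAt ℝ n u p) (hn : 1 ≤ n) :
    pdx u =ᶠ[nhds p] fun q => fderiv ℝ u q (1, 0) :=
  (eventually_differentiableAt h hn).mono fun _ => pdx_eq_fderiv

lemma pdy_eventuallyEq_fderiv {n : WithTop ℕ∞} (h : ContDiffAt ℝ n u p) (hn : 1 ≤ n) :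
    pdy u =ᶠ[nhds p] fun q => fderiv ℝ u q (0, 1) :=
  (eventually_differentiableAt h hn).mono fun _ => pdy_eq_fderiv

lemma contDiffAt_pdx {m n : WithTop ℕ∞} (h : ContDiffAt ℝ n u p) (hmn : m + 1 ≤ n) :
    ContDiffAt ℝ m (pdx u) p :=
  ((h.fderiv_right hmn).clm_apply contDiffAt_const).congr_of_eventuallyEq
    (pdx_eventuallyEq_fderiv h (le_add_self.trans hmn))

lemma contDiffAt_pdy {m n : WithTop ℕ∞} (h : ContDiffAt ℝ n u p) (hmn : m + 1 ≤ n) :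
    ContDiffAt ℝ m (pdy u) p :=
  ((h.fderiv_right hmn).clm_apply contDiffAt_const).congr_of_eventuallyEq
    (pdy_eventuallyEq_fderiv h (le_add_self.trans hmn))

lemma continuousOn_pdx {s : Set (ℝ × ℝ)} (h : ∀ q ∈ s, ContDiffAt ℝ 1 u q) :
    ContinuousOn (pdx u) s := fun q hq =>
  (contDiffAt_pdx (m := 0) (h q hq) (by simp)).continuousAt.continuousWithinAt

lemma continuousOn_pdy {s : Set (ℝ × ℝ)} (h : ∀ q ∈ s, ContDiffAt ℝ 1 u q) :
    ContinuousOn (pdy u) s := fun q hq =>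
  (contDiffAt_pdy (m := 0) (h q hq) (by simp)).continuousAt.continuousWithinAt

lemma continuousOn_lap {s : Set (ℝ × ℝ)} (h : ∀ q ∈ s, ContDiffAt ℝ 2 u q) :
    ContinuousOn (lap u) s :=
  (continuousOn_pdx fun q hq => contDiffAt_pdx (h q hq) (by norm_num)).neg.sub
    (continuousOn_pdy fun q hq => contDiffAt_pdy (h q hq) (by norm_num))

lemma pdx_pdy_comm (h : ContDiffAt ℝ 2 u p) : pdx (pdy u) p = pdy (pdx u) p := by
  have hd : DifferentiableAt ℝ (fderiv ℝ u) p :=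
    (h.fderiv_right (m := 1) (by norm_num)).differentiableAt one_ne_zero
  have hx : DifferentiableAt ℝ (pdx u) p :=
    (contDiffAt_pdx (m := 1) h (by norm_num)).differentiableAt one_ne_zero
  have hy : DifferentiableAt ℝ (pdy u) p :=
    (contDiffAt_pdy (m := 1) h (by norm_num)).differentiableAt one_ne_zero
  have hsymm : IsSymmSndFDerivAt ℝ u p := h.isSymmSndFDerivAt (by simp)
  rw [pdx_eq_fderiv hy, pdy_eq_fderiv hx,
    (pdy_eventuallyEq_fderiv h one_le_two).fderiv_eq,
    (pdx_eventuallyEq_fderiv h one_le_two).fderiv_eq,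
    fderiv_clm_apply hd (differentiableAt_const _), fderiv_clm_apply hd (differentiableAt_const _)]
  simpa using hsymm (1, 0) (0, 1)

lemma rellich_divergence (k : ℝ) (ha : DifferentiableAt ℝ a p) (hu : ContDiffAt ℝ 2 u p) :
    pdx (fun q => a q * (2 * pdx u q * pdy u q)) p +
      pdy (fun q => a q * (pdy u q ^ 2 - pdx u q ^ 2 + k * u q ^ 2)) p =
    2 * pdx a p * pdx u p * pdy u p + pdy a p * (pdy u p ^ 2 - pdx u p ^ 2 + k * u p ^ 2) -
      2 * a p * pdy u p * (lap u p - k * u p) := by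
  have du : DifferentiableAt ℝ u p := hu.differentiableAt two_ne_zero
  have dux : DifferentiableAt ℝ (pdx u) p :=
    (contDiffAt_pdx (m := 1) hu (by norm_num)).differentiableAt one_ne_zero
  have duy : DifferentiableAt ℝ (pdy u) p :=
    (contDiffAt_pdy (m := 1) hu (by norm_num)).differentiableAt one_ne_zero
  have hx : pdx (fun q => a q * (2 * pdx u q * pdy u q)) p = _ :=
    ((hasDerivAt_pdx ha).mul
      (((hasDerivAt_pdx dux).const_mul 2).mul (hasDerivAt_pdx duy))).deriv
  have hy : pdy (fun q => a q * (pdy u q ^ 2 - pdx u q ^ 2 + k * u q ^ 2)) p = _ :=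
    ((hasDerivAt_pdy ha).mul ((((hasDerivAt_pdy duy).pow 2).sub ((hasDerivAt_pdy dux).pow 2)).add
      (((hasDerivAt_pdy du).pow 2).const_mul k))).deriv
  rw [hx, hy, lap, pdx_pdy_comm hu]
  simp only [Pi.mul_apply, Pi.add_apply, Pi.sub_apply, Pi.pow_apply]
  push_cast
  ring

lemma weighted_energy_divergence (ha : DifferentiableAt ℝ a p) (hu : ContDiffAt ℝ 2 u p) :
    pdx (fun q => a q * (u q * pdx u q)) p + pdy (fun q => a q * (u q * pdy u q)) p =
    a p * (pdx u p ^ 2 + pdy u p ^ 2) + u p * (pdx a p * pdx u p + pdy a p * pdy u p) -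
      a p * u p * lap u p := by
  have du : DifferentiableAt ℝ u p := hu.differentiableAt two_ne_zero
  have dux : DifferentiableAt ℝ (pdx u) p :=
    (contDiffAt_pdx (m := 1) hu (by norm_num)).differentiableAt one_ne_zero
  have duy : DifferentiableAt ℝ (pdy u) p :=
    (contDiffAt_pdy (m := 1) hu (by norm_num)).differentiableAt one_ne_zero
  have hx : pdx (fun q => a q * (u q * pdx u q)) p = _ :=
    ((hasDerivAt_pdx ha).mul ((hasDerivAt_pdx du).mul (hasDerivAt_pdx dux))).deriv
  have hy : pdy (fun q => a q * (u q * pdy u q)) p = _ :=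
    ((hasDerivAt_pdy ha).mul ((hasDerivAt_pdy du).mul (hasDerivAt_pdy duy))).deriv
  rw [hx, hy, lap]
  simp only [Pi.mul_apply]
  ring

lemma pdx_mul_snd (g h : ℝ → ℝ) : pdx (fun q => g q.1 * h q.2) p = deriv g p.1 * h p.2 :=
  deriv_mul_const_field (u := fun t => g t) (h p.2)

lemma pdy_mul_snd (g h : ℝ → ℝ) : pdy (fun q => g q.1 * h q.2) p = g p.1 * deriv h p.2 :=
  deriv_const_mul_field (v := fun t => h t) (g p.1)

end PartialDerivatives

section PlaneIntegrals

lemma setIntegral_region_between_cc {s : Set ℝ} {l r : ℝ → ℝ} {h : ℝ × ℝ → ℝ}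
    (hs : MeasurableSet s) (hl : Measurable l) (hr : Measurable r)
    (hh : IntegrableOn h {p | p.1 ∈ s ∧ p.2 ∈ Icc (l p.1) (r p.1)}) :
    ∫ p in {p : ℝ × ℝ | p.1 ∈ s ∧ p.2 ∈ Icc (l p.1) (r p.1)}, h p =
      ∫ x in s, ∫ y in Icc (l x) (r x), h (x, y) := by
  have hD := measurableSet_region_between_cc hl hr hs
  rw [← integral_indicator hD, Measure.volume_eq_prod,
    integral_prod _ ((integrable_indicator_iff hD).2 hh), ← integral_indicator hs]
  congr 1 with x
  by_cases hx : x ∈ s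
  · rw [indicator_of_mem hx, ← integral_indicator measurableSet_Icc]
    simp only [indicator, mem_ofPred_eq, hx, true_and]
  · simp [indicator, hx]

lemma setIntegral_pdy_region_between_cc {a b : ℝ} {l r : ℝ → ℝ} {G : ℝ × ℝ → ℝ} (hab : a ≤ b)
    (hl : Measurable l) (hr : Measurable r) (hlr : ∀ x ∈ Icc a b, l x ≤ r x)
    (hG : ∀ p : ℝ × ℝ, p.1 ∈ Icc a b ∧ p.2 ∈ Icc (l p.1) (r p.1) → ContDiffAt ℝ 1 G p)
    (hint : IntegrableOn (pdy G) {p | p.1 ∈ Icc a b ∧ p.2 ∈ Icc (l p.1) (r p.1)}) :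
    ∫ p in {p : ℝ × ℝ | p.1 ∈ Icc a b ∧ p.2 ∈ Icc (l p.1) (r p.1)}, pdy G p =
      ∫ x in a..b, (G (x, r x) - G (x, l x)) := by
  rw [setIntegral_region_between_cc measurableSet_Icc hl hr hint,
    intervalIntegral.integral_of_le hab, ← integral_Icc_eq_integral_Ioc]
  refine setIntegral_congr_fun measurableSet_Icc fun x hx => ?_
  have hcont : ContinuousOn (fun y => pdy G (x, y)) (Icc (l x) (r x)) := fun y hy =>
    ((contDiffAt_pdy (m := 0) (hG (x, y) ⟨hx, hy⟩) (by simp)).continuousAt.comp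
      (f := fun y => (x, y)) (by fun_prop)).continuousWithinAt
  have hderiv : ∀ y ∈ uIcc (l x) (r x), HasDerivAt (fun t => G (x, t)) (pdy G (x, y)) y :=
    fun y hy => hasDerivAt_pdy (p := (x, y))
      ((hG (x, y) ⟨hx, by rwa [uIcc_of_le (hlr x hx)] at hy⟩).differentiableAt one_ne_zero)
  rw [← uIcc_of_le (hlr x hx)] at hcont
  rw [integral_Icc_eq_integral_Ioc, ← intervalIntegral.integral_of_le (hlr x hx)]
  exact intervalIntegral.integral_eq_sub_of_hasDerivAt hderiv hcont.intervalIntegrable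

lemma setIntegral_preimage_swap (g : ℝ × ℝ → ℝ) (s : Set (ℝ × ℝ)) :
    ∫ p in Prod.swap ⁻¹' s, g p.swap = ∫ p in s, g p :=
  Measure.measurePreserving_swap.setIntegral_preimage_emb
    MeasurableEquiv.prodComm.measurableEmbedding g s

lemma setIntegral_pdx_region_between_cc {a b : ℝ} {l r : ℝ → ℝ} {F : ℝ × ℝ → ℝ} (hab : a ≤ b)
    (hl : Measurable l) (hr : Measurable r) (hlr : ∀ y ∈ Icc a b, l y ≤ r y)
    (hF : ∀ p : ℝ × ℝ, p.2 ∈ Icc a b ∧ p.1 ∈ Icc (l p.2) (r p.2) → ContDiffAt ℝ 1 F p)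
    (hint : IntegrableOn (pdx F) {p | p.2 ∈ Icc a b ∧ p.1 ∈ Icc (l p.2) (r p.2)}) :
    ∫ p in {p : ℝ × ℝ | p.2 ∈ Icc a b ∧ p.1 ∈ Icc (l p.2) (r p.2)}, pdx F p =
      ∫ y in a..b, (F (r y, y) - F (l y, y)) := by
  rw [← setIntegral_preimage_swap]
  refine setIntegral_pdy_region_between_cc (G := F ∘ Prod.swap) hab hl hr hlr
    (fun p hp => (hF p.swap hp).comp p (contDiff_snd.prodMk contDiff_fst).contDiffAt) ?_
  exact (Measure.measurePreserving_swap.integrableOn_comp_preimage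
    MeasurableEquiv.prodComm.measurableEmbedding).2 hint

end PlaneIntegrals

section RightWing

variable {α β : ℝ}

/-- The closed right half-disc `W₊` of radius `β` centred at `(α, 0)`. -/
def rightWing (α β : ℝ) : Set (ℝ × ℝ) := {p | (p.1 - α) ^ 2 + p.2 ^ 2 ≤ β ^ 2 ∧ α ≤ p.1}

/-- The point at angle `θ` on the circle of radius `β` centred at `(α, 0)`; for
`|θ| ≤ π / 2` it runs through the curved side of `rightWing α β`. -/
def arc (α β θ : ℝ) : ℝ × ℝ := (α + β * cos θ, β * sin θ)

/-- The integral over the curved side of `rightWing α β` of an integrand depending on the point and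
the outward unit normal; it is the right half of `bdryIntW`. -/
def arcInt (α β : ℝ) (g : ℝ × ℝ → ℝ × ℝ → ℝ) : ℝ :=
  β * ∫ θ in (-(π / 2))..(π / 2), g (arc α β θ) (cos θ, sin θ)

lemma neg_half_pi_le_half_pi : -(π / 2) ≤ π / 2 := by linarith [pi_pos]

lemma sqrt_sq_sub_sq_eq {a b c : ℝ} (ha : 0 ≤ a) (habc : a ^ 2 + b ^ 2 = c ^ 2) :
    √(c ^ 2 - b ^ 2) = a := by
  rw [← habc, add_sub_cancel_right, sqrt_sq ha]

@[fun_prop]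
lemma continuous_arc : Continuous (arc α β) := by unfold arc; fun_prop

lemma rightWing_eq_region_over_fst (hβ : 0 ≤ β) : rightWing α β =
    {p | p.1 ∈ Icc α (α + β) ∧ p.2 ∈ Icc (-√(β ^ 2 - (p.1 - α) ^ 2)) √(β ^ 2 - (p.1 - α) ^ 2)} := by
  ext ⟨x, y⟩
  constructor
  · rintro ⟨hdisc, hx⟩
    have hxβ := abs_le_of_sq_le_sq (a := x - α) (b := β) (by nlinarith) hβ
    exact ⟨⟨hx, by linarith [(abs_le.1 hxβ).2]⟩, abs_le.1 (abs_le_sqrt (by linarith))⟩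
  · rintro ⟨⟨hx, hxβ⟩, hy⟩
    have hnonneg : 0 ≤ β ^ 2 - (x - α) ^ 2 := by nlinarith
    exact ⟨by linarith [(Real.sq_le hnonneg).2 hy], hx⟩

lemma rightWing_eq_region_over_snd (hβ : 0 ≤ β) : rightWing α β =
    {p | p.2 ∈ Icc (-β) β ∧ p.1 ∈ Icc α (α + √(β ^ 2 - p.2 ^ 2))} := by
  ext ⟨x, y⟩
  constructor
  · rintro ⟨hdisc, hx⟩
    have hxy : x - α ≤ √(β ^ 2 - y ^ 2) := le_sqrt_of_sq_le (by linarith)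
    exact ⟨abs_le.1 (abs_le_of_sq_le_sq (by nlinarith) hβ), hx, by linarith⟩
  · rintro ⟨hy, hx, hxy⟩
    have hnonneg : 0 ≤ β ^ 2 - y ^ 2 := by nlinarith [hy.1, hy.2]
    have hsq : (x - α) ^ 2 ≤ β ^ 2 - y ^ 2 :=
      (Real.sq_le hnonneg).2 ⟨by linarith [sqrt_nonneg (β ^ 2 - y ^ 2)], by linarith⟩
    exact ⟨by linarith, hx⟩

lemma isCompact_rightWing (hβ : 0 ≤ β) : IsCompact (rightWing α β) := by
  have hclosed : IsClosed (rightWing α β) :=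
    (isClosed_le (f := fun p : ℝ × ℝ => (p.1 - α) ^ 2 + p.2 ^ 2) (by fun_prop)
      continuous_const).inter (isClosed_le continuous_const continuous_fst)
  refine (isCompact_Icc (a := α) (b := α + β)).prod (isCompact_Icc (a := -β) (b := β))
    |>.of_isClosed_subset hclosed fun p hp => ?_
  exact ⟨((rightWing_eq_region_over_fst hβ).subset hp).1,
    ((rightWing_eq_region_over_snd hβ).subset hp).1⟩

lemma arc_mem_rightWing (hβ : 0 ≤ β) {θ : ℝ} (hθ : θ ∈ Icc (-(π / 2)) (π / 2)) :
    arc α β θ ∈ rightWing α β := by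
  have hcos := mul_nonneg hβ (cos_nonneg_of_mem_Icc hθ)
  constructor
  · simp only [arc]
    nlinarith [sin_sq_add_cos_sq θ]
  · simpa only [arc, le_add_iff_nonneg_right] using hcos

lemma arcInt_congr {g h : ℝ × ℝ → ℝ × ℝ → ℝ}
    (hgh : ∀ θ ∈ Icc (-(π / 2)) (π / 2),
      g (arc α β θ) (cos θ, sin θ) = h (arc α β θ) (cos θ, sin θ)) :
    arcInt α β g = arcInt α β h := by
  unfold arcInt
  congr 1
  refine intervalIntegral.integral_congr fun θ hθ => hgh θ ?_
  rwa [uIcc_of_le neg_half_pi_le_half_pi] at hθ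

lemma continuousOn_comp_arc (hβ : 0 ≤ β) {g : ℝ × ℝ → ℝ} (hg : ContinuousOn g (rightWing α β)) :
    ContinuousOn (fun θ => g (arc α β θ)) (Icc (-(π / 2)) (π / 2)) :=
  hg.comp continuous_arc.continuousOn fun _ hθ => arc_mem_rightWing hβ hθ

lemma integral_comp_mul_sin (hβ : 0 ≤ β) {g : ℝ → ℝ} (hg : ContinuousOn g (Icc (-β) β)) :
    ∫ y in (-β)..β, g y = β * ∫ θ in (-(π / 2))..(π / 2), cos θ * g (β * sin θ) := by
  have hsubst := intervalIntegral.integral_comp_mul_deriv'' (a := -(π / 2)) (b := π / 2)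
    (f := fun θ => β * sin θ) (f' := fun θ => β * cos θ) (g := g) (by fun_prop)
    (fun θ _ => ((hasDerivAt_sin θ).const_mul β).hasDerivWithinAt) (by fun_prop)
    (hg.mono (by
      rintro _ ⟨θ, -, rfl⟩
      constructor <;> nlinarith [sin_le_one θ, neg_one_le_sin θ]))
  simp only [sin_neg, sin_pi_div_two, mul_neg, mul_one] at hsubst
  rw [← hsubst, ← intervalIntegral.integral_const_mul]
  refine intervalIntegral.integral_congr fun θ _ => ?_
  simp only [Function.comp_apply]
  ring

lemma integral_comp_add_mul_cos (hβ : 0 ≤ β) {g : ℝ → ℝ} (hg : ContinuousOn g (Icc α (α + β))) :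
    ∫ x in α..(α + β), g x = β * ∫ θ in (0)..(π / 2), sin θ * g (α + β * cos θ) := by
  have hsubst := intervalIntegral.integral_comp_mul_deriv'' (a := 0) (b := π / 2)
    (f := fun θ => α + β * cos θ) (f' := fun θ => β * -sin θ) (g := g) (by fun_prop)
    (fun θ _ => (((hasDerivAt_cos θ).const_mul β).const_add α).hasDerivWithinAt) (by fun_prop)
    (hg.mono (by
      rintro _ ⟨θ, hθ, rfl⟩
      rw [uIcc_of_le (by positivity)] at hθ
      have hcos := cos_nonneg_of_mem_Icc (x := θ) ⟨by linarith [hθ.1, pi_pos], hθ.2⟩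
      constructor <;> nlinarith [cos_le_one θ]))
  simp only [cos_zero, cos_pi_div_two, mul_one, mul_zero, add_zero] at hsubst
  rw [intervalIntegral.integral_symm, ← hsubst, ← intervalIntegral.integral_const_mul,
    ← intervalIntegral.integral_neg]
  refine intervalIntegral.integral_congr fun θ _ => ?_
  simp only [Function.comp_apply]
  ring

lemma integral_symm_eq_add_comp_neg {b : ℝ} {g : ℝ → ℝ} (hb : 0 ≤ b)
    (hg : ContinuousOn g (Icc (-b) b)) :
    ∫ θ in (-b)..b, g θ = ∫ θ in (0)..b, (g θ + g (-θ)) := by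
  have hneg : IntervalIntegrable g volume (-b) 0 :=
    (hg.mono (by rw [uIcc_of_le (by simpa)]; gcongr)).intervalIntegrable
  have hpos : IntervalIntegrable g volume 0 b :=
    (hg.mono (by rw [uIcc_of_le hb]; gcongr; simpa)).intervalIntegrable
  have hneg' : IntervalIntegrable (fun θ => g (-θ)) volume 0 b :=
    (hg.comp continuous_neg.continuousOn fun θ hθ => by
      rw [uIcc_of_le hb] at hθ
      exact ⟨neg_le_neg hθ.2, by linarith [hθ.1]⟩).intervalIntegrable
  rw [intervalIntegral.integral_add hpos hneg', intervalIntegral.integral_comp_neg, neg_zero,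
    add_comm, intervalIntegral.integral_add_adjacent_intervals hneg hpos]

lemma integrableOn_rightWing (hβ : 0 ≤ β) {g : ℝ × ℝ → ℝ} (hg : ContinuousOn g (rightWing α β)) :
    IntegrableOn g (rightWing α β) :=
  hg.integrableOn_compact (isCompact_rightWing hβ)

lemma setIntegral_pdx_rightWing (hβ : 0 ≤ β) {F : ℝ × ℝ → ℝ}
    (hF : ∀ p ∈ rightWing α β, ContDiffAt ℝ 1 F p) :
    ∫ p in rightWing α β, pdx F p =
      arcInt α β (fun p n => n.1 * F p) - ∫ y in (-β)..β, F (α, y) := by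
  have hregion := rightWing_eq_region_over_snd (α := α) hβ
  have hint : IntegrableOn (pdx F) (rightWing α β) :=
    integrableOn_rightWing hβ (continuousOn_pdx hF)
  have hcont : ContinuousOn F (rightWing α β) :=
    fun p hp => (hF p hp).continuousAt.continuousWithinAt
  have hround : ContinuousOn (fun y => F (α + √(β ^ 2 - y ^ 2), y)) (Icc (-β) β) :=
    hcont.comp (f := fun y => (α + √(β ^ 2 - y ^ 2), y)) (by fun_prop) fun y hy => by
      rw [hregion]; exact ⟨hy, by simp [sqrt_nonneg], le_rfl⟩
  have hflat : ContinuousOn (fun y => F (α, y)) (Icc (-β) β) :=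
    hcont.comp (f := fun y => (α, y)) (by fun_prop) fun y hy => by
      rw [hregion]; exact ⟨hy, le_rfl, by simp [sqrt_nonneg]⟩
  have hββ : -β ≤ β := by linarith
  rw [hregion] at hint hF ⊢
  rw [setIntegral_pdx_region_between_cc (l := fun _ => α) (r := fun y => α + √(β ^ 2 - y ^ 2))
    hββ (by fun_prop) (by fun_prop) (fun y _ => by simp [sqrt_nonneg]) hF hint,
    intervalIntegral.integral_sub (hround.intervalIntegrable_of_Icc hββ)
      (hflat.intervalIntegrable_of_Icc hββ), integral_comp_mul_sin hβ hround]
  congr 1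
  refine arcInt_congr (g := fun p n => n.1 * F (α + √(β ^ 2 - p.2 ^ 2), p.2)) fun θ hθ => ?_
  have hsqrt : √(β ^ 2 - (β * sin θ) ^ 2) = β * cos θ :=
    sqrt_sq_sub_sq_eq (mul_nonneg hβ (cos_nonneg_of_mem_Icc hθ))
      (by linear_combination β ^ 2 * sin_sq_add_cos_sq θ)
  simp only [arc, hsqrt]

lemma setIntegral_pdy_rightWing (hβ : 0 ≤ β) {G : ℝ × ℝ → ℝ}
    (hG : ∀ p ∈ rightWing α β, ContDiffAt ℝ 1 G p) :
    ∫ p in rightWing α β, pdy G p = arcInt α β (fun p n => n.2 * G p) := by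
  have hregion := rightWing_eq_region_over_fst (α := α) hβ
  have hint : IntegrableOn (pdy G) (rightWing α β) :=
    integrableOn_rightWing hβ (continuousOn_pdy hG)
  have hcont : ContinuousOn G (rightWing α β) :=
    fun p hp => (hG p hp).continuousAt.continuousWithinAt
  have hneg_le (x : ℝ) : -√(β ^ 2 - (x - α) ^ 2) ≤ √(β ^ 2 - (x - α) ^ 2) := by
    linarith [sqrt_nonneg (β ^ 2 - (x - α) ^ 2)]
  have hchords : ContinuousOn (fun x => G (x, √(β ^ 2 - (x - α) ^ 2)) -
      G (x, -√(β ^ 2 - (x - α) ^ 2))) (Icc α (α + β)) := by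
    refine .sub (hcont.comp (f := fun x => (x, √(β ^ 2 - (x - α) ^ 2))) (by fun_prop) ?_)
      (hcont.comp (f := fun x => (x, -√(β ^ 2 - (x - α) ^ 2))) (by fun_prop) ?_) <;>
    intro x hx <;> rw [hregion]
    exacts [⟨hx, hneg_le x, le_rfl⟩, ⟨hx, le_rfl, hneg_le x⟩]
  have harc : ContinuousOn (fun θ => sin θ * G (arc α β θ)) (Icc (-(π / 2)) (π / 2)) :=
    (by fun_prop : ContinuousOn sin _).mul (continuousOn_comp_arc hβ hcont)
  rw [hregion] at hint hG ⊢
  rw [setIntegral_pdy_region_between_cc (l := fun x => -√(β ^ 2 - (x - α) ^ 2))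
    (r := fun x => √(β ^ 2 - (x - α) ^ 2)) (le_add_of_nonneg_right hβ) (by fun_prop) (by fun_prop)
    (fun x _ => hneg_le x) hG hint, integral_comp_add_mul_cos hβ hchords, arcInt,
    integral_symm_eq_add_comp_neg (by positivity) harc]
  congr 1
  refine intervalIntegral.integral_congr fun θ hθ => ?_
  rw [uIcc_of_le (by positivity)] at hθ
  have hsqrt : √(β ^ 2 - (α + β * cos θ - α) ^ 2) = β * sin θ :=
    sqrt_sq_sub_sq_eq
      (mul_nonneg hβ (sin_nonneg_of_nonneg_of_le_pi hθ.1 (by linarith [hθ.2, pi_pos])))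
      (by linear_combination β ^ 2 * sin_sq_add_cos_sq θ)
  simp only [arc, hsqrt, cos_neg, sin_neg, mul_neg]
  ring

lemma arcInt_add (hβ : 0 ≤ β) {g h : ℝ × ℝ → ℝ × ℝ → ℝ}
    (hg : ContinuousOn (fun q : (ℝ × ℝ) × (ℝ × ℝ) => g q.1 q.2) (rightWing α β ×ˢ univ))
    (hh : ContinuousOn (fun q : (ℝ × ℝ) × (ℝ × ℝ) => h q.1 q.2) (rightWing α β ×ˢ univ)) :
    arcInt α β (fun p n => g p n + h p n) = arcInt α β g + arcInt α β h := by
  have hint {k : ℝ × ℝ → ℝ × ℝ → ℝ}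
      (hk : ContinuousOn (fun q : (ℝ × ℝ) × (ℝ × ℝ) => k q.1 q.2) (rightWing α β ×ˢ univ)) :
      IntervalIntegrable (fun θ => k (arc α β θ) (cos θ, sin θ)) volume (-(π / 2)) (π / 2) :=
    (hk.comp (f := fun θ => (arc α β θ, (cos θ, sin θ))) (by fun_prop)
      fun θ hθ => ⟨arc_mem_rightWing hβ hθ, mem_univ _⟩).intervalIntegrable_of_Icc
        neg_half_pi_le_half_pi
  rw [arcInt, intervalIntegral.integral_add (hint hg) (hint hh), mul_add, arcInt, arcInt]

theorem divergence_rightWing (hβ : 0 ≤ β) {F G : ℝ × ℝ → ℝ}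
    (hF : ∀ p ∈ rightWing α β, ContDiffAt ℝ 1 F p) (hG : ∀ p ∈ rightWing α β, ContDiffAt ℝ 1 G p) :
    ∫ p in rightWing α β, (pdx F p + pdy G p) =
      arcInt α β (fun p n => n.1 * F p + n.2 * G p) - ∫ y in (-β)..β, F (α, y) := by
  have hcF : ContinuousOn F (rightWing α β) :=
    fun p hp => (hF p hp).continuousAt.continuousWithinAt
  have hcG : ContinuousOn G (rightWing α β) :=
    fun p hp => (hG p hp).continuousAt.continuousWithinAt
  have hfst : MapsTo Prod.fst (rightWing α β ×ˢ (univ : Set (ℝ × ℝ))) (rightWing α β) :=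
    fun _ hq => hq.1
  rw [integral_add (integrableOn_rightWing hβ (continuousOn_pdx hF))
      (integrableOn_rightWing hβ (continuousOn_pdy hG)),
    setIntegral_pdx_rightWing hβ hF, setIntegral_pdy_rightWing hβ hG,
    arcInt_add hβ ((by fun_prop : ContinuousOn _ _).mul (hcF.comp continuousOn_fst hfst))
      ((by fun_prop : ContinuousOn _ _).mul (hcG.comp continuousOn_fst hfst))]
  ring

lemma cos_mul_pdy_arc_eq_sin_mul_pdx_arc (hβ : 0 < β) {u : ℝ × ℝ → ℝ} {θ : ℝ}
    (hu : DifferentiableAt ℝ u (arc α β θ))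
    (h0 : ∀ t ∈ Icc (-(π / 2)) (π / 2), u (arc α β t) = 0) (hθ : θ ∈ Icc (-(π / 2)) (π / 2)) :
    cos θ * pdy u (arc α β θ) = sin θ * pdx u (arc α β θ) := by
  have harc : HasDerivAt (arc α β) (β * -sin θ, β * cos θ) θ :=
    (((hasDerivAt_cos θ).const_mul β).const_add α).prodMk ((hasDerivAt_sin θ).const_mul β)
  have hzero : HasDerivWithinAt (u ∘ arc α β) 0 (Icc (-(π / 2)) (π / 2)) θ :=
    (hasDerivWithinAt_const θ _ (0 : ℝ)).congr h0 (h0 θ hθ)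
  have hderiv : fderiv ℝ u (arc α β θ) (β * -sin θ, β * cos θ) = 0 :=
    (uniqueDiffOn_Icc (by linarith [pi_pos]) θ hθ).eq_deriv _
      (hu.hasFDerivAt.comp_hasDerivAt θ harc).hasDerivWithinAt hzero
  have hbasis : ((β * -sin θ, β * cos θ) : ℝ × ℝ) =
      (β * -sin θ) • (1, 0) + (β * cos θ) • (0, 1) := by
    ext <;> simp
  rw [hbasis, map_add, map_smul, map_smul, ← pdx_eq_fderiv hu, ← pdy_eq_fderiv hu,
    smul_eq_mul, smul_eq_mul] at hderiv
  refine mul_left_cancel₀ hβ.ne' ?_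
  linear_combination hderiv

end RightWing

section RightWingEstimate

variable {α β : ℝ} {u a : ℝ × ℝ → ℝ}

lemma divergence_rightWing_of_flat_eq_zero (hβ : 0 ≤ β) {F G : ℝ × ℝ → ℝ}
    (hF : ∀ p ∈ rightWing α β, ContDiffAt ℝ 1 F p) (hG : ∀ p ∈ rightWing α β, ContDiffAt ℝ 1 G p)
    (hF0 : ∀ y ∈ Icc (-β) β, F (α, y) = 0) :
    ∫ p in rightWing α β, (pdx F p + pdy G p) =
      arcInt α β (fun p n => n.1 * F p + n.2 * G p) := by
  have hflat : ∫ y in (-β)..β, F (α, y) = ∫ _ in (-β)..β, 0 :=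
    intervalIntegral.integral_congr fun y hy => hF0 y (by rwa [uIcc_of_le (by linarith)] at hy)
  rw [divergence_rightWing hβ hF hG, hflat, intervalIntegral.integral_zero, sub_zero]

theorem rellich_identity_rightWing (hβ : 0 < β) (k : ℝ)
    (ha : ∀ p ∈ rightWing α β, ContDiffAt ℝ 1 a p) (ha0 : ∀ y ∈ Icc (-β) β, a (α, y) = 0)
    (hu : ∀ p ∈ rightWing α β, ContDiffAt ℝ 2 u p)
    (h0 : ∀ θ ∈ Icc (-(π / 2)) (π / 2), u (arc α β θ) = 0) :
    arcInt α β (fun p n => a p * pdy u p * nderiv u p n) =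
      ∫ p in rightWing α β,
        (2 * pdx a p * pdx u p * pdy u p +
          pdy a p * (pdy u p ^ 2 - pdx u p ^ 2 + k * u p ^ 2) -
          2 * a p * pdy u p * (lap u p - k * u p)) := by
  have hux : ∀ p ∈ rightWing α β, ContDiffAt ℝ 1 (pdx u) p :=
    fun p hp => contDiffAt_pdx (hu p hp) (by norm_num)
  have huy : ∀ p ∈ rightWing α β, ContDiffAt ℝ 1 (pdy u) p :=
    fun p hp => contDiffAt_pdy (hu p hp) (by norm_num)
  have hu1 : ∀ p ∈ rightWing α β, ContDiffAt ℝ 1 u p := fun p hp => (hu p hp).of_le one_le_two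
  have hdiv := divergence_rightWing_of_flat_eq_zero hβ.le
    (F := fun q => a q * (2 * pdx u q * pdy u q))
    (G := fun q => a q * (pdy u q ^ 2 - pdx u q ^ 2 + k * u q ^ 2))
    (fun p hp => (ha p hp).mul ((contDiffAt_const.mul (hux p hp)).mul (huy p hp)))
    (fun p hp => (ha p hp).mul ((((huy p hp).pow 2).sub ((hux p hp).pow 2)).add
      (contDiffAt_const.mul ((hu1 p hp).pow 2))))
    (fun y hy => by simp [ha0 y hy])
  have hinterior := setIntegral_congr_fun (μ := volume) (isCompact_rightWing hβ.le).measurableSet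
    fun p (hp : p ∈ rightWing α β) =>
      rellich_divergence k ((ha p hp).differentiableAt one_ne_zero) (hu p hp)
  rw [← hinterior, hdiv]
  refine arcInt_congr fun θ hθ => ?_
  have htangent := cos_mul_pdy_arc_eq_sin_mul_pdx_arc hβ
    ((hu _ (arc_mem_rightWing hβ.le hθ)).differentiableAt two_ne_zero) h0 hθ
  simp only [nderiv, h0 θ hθ]
  linear_combination (-(a (arc α β θ) * pdx u (arc α β θ))) * htangent

theorem weighted_energy_identity_rightWing (hβ : 0 ≤ β)
    (ha : ∀ p ∈ rightWing α β, ContDiffAt ℝ 1 a p) (ha0 : ∀ y ∈ Icc (-β) β, a (α, y) = 0)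
    (hu : ∀ p ∈ rightWing α β, ContDiffAt ℝ 2 u p)
    (h0 : ∀ θ ∈ Icc (-(π / 2)) (π / 2), u (arc α β θ) = 0) :
    ∫ p in rightWing α β,
      (a p * (pdx u p ^ 2 + pdy u p ^ 2) + u p * (pdx a p * pdx u p + pdy a p * pdy u p) -
        a p * u p * lap u p) = 0 := by
  have hu1 : ∀ p ∈ rightWing α β, ContDiffAt ℝ 1 u p := fun p hp => (hu p hp).of_le one_le_two
  have hdiv := divergence_rightWing_of_flat_eq_zero hβ
    (F := fun q => a q * (u q * pdx u q)) (G := fun q => a q * (u q * pdy u q))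
    (fun p hp => (ha p hp).mul ((hu1 p hp).mul (contDiffAt_pdx (hu p hp) (by norm_num))))
    (fun p hp => (ha p hp).mul ((hu1 p hp).mul (contDiffAt_pdy (hu p hp) (by norm_num))))
    (fun y hy => by simp [ha0 y hy])
  have hinterior := setIntegral_congr_fun (μ := volume) (isCompact_rightWing hβ).measurableSet
    fun p (hp : p ∈ rightWing α β) =>
      weighted_energy_divergence ((ha p hp).differentiableAt one_ne_zero) (hu p hp)
  have hboundary : arcInt α β (fun p n => n.1 * (a p * (u p * pdx u p)) +
      n.2 * (a p * (u p * pdy u p))) = arcInt α β fun _ _ => 0 :=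
    arcInt_congr fun θ hθ => by simp [h0 θ hθ]
  rw [← hinterior, hdiv, hboundary]
  simp [arcInt]

lemma weighted_energy_pointwise {L w v vx vy l : ℝ} (hL : 1 ≤ L) (hw : w ^ 2 ≤ β ^ 2) :
    L ^ 4 * (w ^ 2 * (vx ^ 2 + vy ^ 2)) ≤
      2 * L ^ 4 * (w ^ 2 * (vx ^ 2 + vy ^ 2) + v * (2 * w * vx) - w ^ 2 * v * l) +
        ((4 + 2 * β ^ 2 + β ^ 4) * L ^ 8 * v ^ 2 + (l - L ^ 2 * v) ^ 2) := by
  have hw4 : w ^ 4 ≤ β ^ 4 := by simpa only [← pow_mul] using pow_le_pow_left₀ (sq_nonneg w) hw 2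
  have hcross : -(4 * L ^ 4 * (v * w * vx)) ≤
      L ^ 4 * w ^ 2 * (vx ^ 2 + vy ^ 2) + 4 * L ^ 8 * v ^ 2 := by
    have hsq : 0 ≤ L ^ 4 * ((w * vx + 2 * v) ^ 2 + (w * vy) ^ 2) := by positivity
    have hpow : 4 * L ^ 4 * v ^ 2 ≤ 4 * L ^ 8 * v ^ 2 := by gcongr; norm_num
    linarith
  have hmass : 2 * L ^ 6 * w ^ 2 * v ^ 2 ≤ 2 * L ^ 8 * β ^ 2 * v ^ 2 := by gcongr; norm_num
  have hsource : 2 * L ^ 4 * w ^ 2 * v * (l - L ^ 2 * v) ≤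
      L ^ 8 * β ^ 4 * v ^ 2 + (l - L ^ 2 * v) ^ 2 := by
    have hsq : 0 ≤ (L ^ 4 * w ^ 2 * v - (l - L ^ 2 * v)) ^ 2 := sq_nonneg _
    have hpow : L ^ 8 * w ^ 4 * v ^ 2 ≤ L ^ 8 * β ^ 4 * v ^ 2 := by gcongr
    linarith
  linarith

lemma sq_fst_sub_le_of_mem_rightWing {p : ℝ × ℝ} (hp : p ∈ rightWing α β) :
    (p.1 - α) ^ 2 ≤ β ^ 2 := by
  linarith [hp.1, sq_nonneg p.2]

lemma snd_mem_Icc_of_mem_rightWing (hβ : 0 ≤ β) {p : ℝ × ℝ} (hp : p ∈ rightWing α β) :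
    p.2 ∈ Icc (-β) β :=
  ((rightWing_eq_region_over_snd hβ).subset hp).1

theorem weighted_energy_estimate_rightWing (hβ : 0 ≤ β) {L : ℝ} (hL : 1 ≤ L)
    (hu : ∀ p ∈ rightWing α β, ContDiffAt ℝ 2 u p)
    (h0 : ∀ θ ∈ Icc (-(π / 2)) (π / 2), u (arc α β θ) = 0) :
    L ^ 4 * ∫ p in rightWing α β, (p.1 - α) ^ 2 * (pdx u p ^ 2 + pdy u p ^ 2) ≤
      (4 + 2 * β ^ 2 + β ^ 4) * L ^ 8 * (∫ p in rightWing α β, u p ^ 2) +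
        ∫ p in rightWing α β, (lap u p - L ^ 2 * u p) ^ 2 := by
  have hint {g : ℝ × ℝ → ℝ} (hg : ContinuousOn g (rightWing α β)) :
      IntegrableOn g (rightWing α β) := integrableOn_rightWing hβ hg
  have hu1 : ∀ p ∈ rightWing α β, ContDiffAt ℝ 1 u p := fun p hp => (hu p hp).of_le one_le_two
  have hcu : ContinuousOn u (rightWing α β) :=
    fun p hp => (hu p hp).continuousAt.continuousWithinAt
  have hcx := continuousOn_pdx hu1
  have hcy := continuousOn_pdy hu1
  have hclap := continuousOn_lap hu
  let E (p : ℝ × ℝ) : ℝ := (p.1 - α) ^ 2 * (pdx u p ^ 2 + pdy u p ^ 2) +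
    u p * (2 * (p.1 - α) * pdx u p) - (p.1 - α) ^ 2 * u p * lap u p
  have hcE : ContinuousOn E (rightWing α β) := by fun_prop
  have hE : ∫ p in rightWing α β, E p = 0 := by
    have hidentity := weighted_energy_identity_rightWing hβ (a := fun p => (p.1 - α) ^ 2)
      (fun p _ => by fun_prop) (by simp) hu h0
    simpa [E, pdx, pdy] using hidentity
  calc L ^ 4 * ∫ p in rightWing α β, (p.1 - α) ^ 2 * (pdx u p ^ 2 + pdy u p ^ 2)
      = ∫ p in rightWing α β, L ^ 4 * ((p.1 - α) ^ 2 * (pdx u p ^ 2 + pdy u p ^ 2)) :=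
        (integral_const_mul _ _).symm
    _ ≤ ∫ p in rightWing α β, (2 * L ^ 4 * E p +
          ((4 + 2 * β ^ 2 + β ^ 4) * L ^ 8 * u p ^ 2 + (lap u p - L ^ 2 * u p) ^ 2)) := by
        refine setIntegral_mono_on (hint (by fun_prop)) (hint (by fun_prop))
          (isCompact_rightWing hβ).measurableSet fun p hp => ?_
        exact weighted_energy_pointwise hL (sq_fst_sub_le_of_mem_rightWing hp)
    _ = _ := by
        rw [integral_add (hint (by fun_prop)) (hint (by fun_prop)),
          integral_add (hint (by fun_prop)) (hint (by fun_prop)), integral_const_mul, hE,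
          mul_zero, zero_add, integral_const_mul]

lemma rellich_pointwise {K L ε w c c' v vx vy f : ℝ} (hε : 0 < ε) (hL : 1 ≤ L)
    (hw : w ^ 2 ≤ β ^ 2) (hc : |c| ≤ K) (hc' : |c'| ≤ K) :
    L ^ 2 * (2 * (2 * w * c) * vx * vy + w ^ 2 * c' * (vy ^ 2 - vx ^ 2 + L ^ 2 * v ^ 2) -
        2 * (w ^ 2 * c) * vy * f) ≤
      ε * vx ^ 2 + (4 * K ^ 2 / ε + K + β ^ 2 * K ^ 2) * L ^ 4 * (w ^ 2 * (vx ^ 2 + vy ^ 2)) +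
        K * β ^ 2 * L ^ 8 * v ^ 2 + f ^ 2 := by
  have hK : 0 ≤ K := (abs_nonneg c).trans hc
  have hc2 : c ^ 2 ≤ K ^ 2 := sq_le_sq' (abs_le.1 hc).1 (abs_le.1 hc).2
  have hcross : L ^ 2 * (4 * w * c * vx * vy) ≤
      ε * vx ^ 2 + 4 * K ^ 2 / ε * L ^ 4 * (w ^ 2 * (vx ^ 2 + vy ^ 2)) :=
    calc L ^ 2 * (4 * w * c * vx * vy)
        ≤ L ^ 2 * (4 * w * c * vx * vy) + (ε * vx - 2 * c * L ^ 2 * w * vy) ^ 2 / ε :=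
          le_add_of_nonneg_right (by positivity)
      _ = ε * vx ^ 2 + 4 * c ^ 2 / ε * L ^ 4 * (w ^ 2 * (0 + vy ^ 2)) := by field_simp; ring
      _ ≤ ε * vx ^ 2 + 4 * K ^ 2 / ε * L ^ 4 * (w ^ 2 * (vx ^ 2 + vy ^ 2)) := by
          gcongr; positivity
  have hcutoff : L ^ 2 * (w ^ 2 * (c' * (vy ^ 2 - vx ^ 2 + L ^ 2 * v ^ 2))) ≤
      K * L ^ 4 * (w ^ 2 * (vx ^ 2 + vy ^ 2)) + K * β ^ 2 * L ^ 8 * v ^ 2 :=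
    calc L ^ 2 * (w ^ 2 * (c' * (vy ^ 2 - vx ^ 2 + L ^ 2 * v ^ 2)))
        ≤ L ^ 2 * (w ^ 2 * (K * (vx ^ 2 + vy ^ 2 + L ^ 2 * v ^ 2))) := by
          gcongr L ^ 2 * (w ^ 2 * ?_)
          refine (le_abs_self _).trans ?_
          refine (abs_mul _ _).trans_le (mul_le_mul hc' ?_ (abs_nonneg _) hK)
          exact abs_le.2 ⟨by nlinarith [sq_nonneg vy, sq_nonneg (L * v)],
            by nlinarith [sq_nonneg vx]⟩
      _ = K * L ^ 2 * (w ^ 2 * (vx ^ 2 + vy ^ 2)) + K * w ^ 2 * L ^ 4 * v ^ 2 := by ring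
      _ ≤ K * L ^ 4 * (w ^ 2 * (vx ^ 2 + vy ^ 2)) + K * β ^ 2 * L ^ 8 * v ^ 2 := by
          gcongr <;> norm_num
  have hsource : L ^ 2 * -(2 * w ^ 2 * c * vy * f) ≤
      f ^ 2 + β ^ 2 * K ^ 2 * L ^ 4 * (w ^ 2 * (vx ^ 2 + vy ^ 2)) :=
    calc L ^ 2 * -(2 * w ^ 2 * c * vy * f)
        ≤ L ^ 2 * -(2 * w ^ 2 * c * vy * f) + (f + L ^ 2 * w ^ 2 * c * vy) ^ 2 :=
          le_add_of_nonneg_right (sq_nonneg _)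
      _ = f ^ 2 + w ^ 2 * c ^ 2 * L ^ 4 * (w ^ 2 * (0 + vy ^ 2)) := by ring
      _ ≤ f ^ 2 + β ^ 2 * K ^ 2 * L ^ 4 * (w ^ 2 * (vx ^ 2 + vy ^ 2)) := by
          gcongr; positivity
  linarith

theorem rellich_estimate_rightWing (hβ : 0 < β) {χ : ℝ → ℝ} (hχ : ContDiff ℝ 1 χ) {K : ℝ}
    (hK : ∀ y ∈ Icc (-β) β, |χ y| ≤ K) (hK' : ∀ y ∈ Icc (-β) β, |deriv χ y| ≤ K)
    {ε L : ℝ} (hε : 0 < ε) (hL : 1 ≤ L) (hu : ∀ p ∈ rightWing α β, ContDiffAt ℝ 2 u p)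
    (h0 : ∀ θ ∈ Icc (-(π / 2)) (π / 2), u (arc α β θ) = 0) :
    L ^ 2 * arcInt α β (fun p n => (p.1 - α) ^ 2 * χ p.2 * pdy u p * nderiv u p n) ≤
      ε * (∫ p in rightWing α β, pdx u p ^ 2) +
        (4 * K ^ 2 / ε + K + β ^ 2 * K ^ 2) * L ^ 4 *
          (∫ p in rightWing α β, (p.1 - α) ^ 2 * (pdx u p ^ 2 + pdy u p ^ 2)) +
        K * β ^ 2 * L ^ 8 * (∫ p in rightWing α β, u p ^ 2) +
        ∫ p in rightWing α β, (lap u p - L ^ 2 * u p) ^ 2 := by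
  have hint {g : ℝ × ℝ → ℝ} (hg : ContinuousOn g (rightWing α β)) :
      IntegrableOn g (rightWing α β) := integrableOn_rightWing hβ.le hg
  have hu1 : ∀ p ∈ rightWing α β, ContDiffAt ℝ 1 u p := fun p hp => (hu p hp).of_le one_le_two
  have hcu : ContinuousOn u (rightWing α β) :=
    fun p hp => (hu p hp).continuousAt.continuousWithinAt
  have hcx := continuousOn_pdx hu1
  have hcy := continuousOn_pdy hu1
  have hclap := continuousOn_lap hu
  have hcχ := hχ.continuous
  have hpdx (p : ℝ × ℝ) :
      pdx (fun q => (q.1 - α) ^ 2 * χ q.2) p = 2 * (p.1 - α) * χ p.2 := by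
    simp [pdx_mul_snd (fun x => (x - α) ^ 2) χ]
  have hpdy (p : ℝ × ℝ) :
      pdy (fun q => (q.1 - α) ^ 2 * χ q.2) p = (p.1 - α) ^ 2 * deriv χ p.2 :=
    pdy_mul_snd (fun x => (x - α) ^ 2) χ
  rw [rellich_identity_rightWing hβ (L ^ 2) (a := fun q => (q.1 - α) ^ 2 * χ q.2)
    (fun p _ => by fun_prop) (by simp) hu h0]
  simp only [hpdx, hpdy]
  rw [← integral_const_mul, ← integral_const_mul, ← integral_const_mul, ← integral_const_mul,
    ← integral_add (hint (by fun_prop)) (hint (by fun_prop)),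
    ← integral_add (hint (by fun_prop)) (hint (by fun_prop)),
    ← integral_add (hint (by fun_prop)) (hint (by fun_prop))]
  exact setIntegral_mono_on (hint (by fun_prop)) (hint (by fun_prop))
    (isCompact_rightWing hβ.le).measurableSet fun p hp =>
      have hy := snd_mem_Icc_of_mem_rightWing hβ.le hp
      rellich_pointwise hε hL (sq_fst_sub_le_of_mem_rightWing hp) (hK _ hy) (hK' _ hy)

lemma exists_pos_bound_with_deriv {χ : ℝ → ℝ} (hχ : ContDiff ℝ 1 χ) {s : Set ℝ}
    (hs : IsCompact s) : ∃ K > 0, (∀ y ∈ s, |χ y| ≤ K) ∧ ∀ y ∈ s, |deriv χ y| ≤ K := by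
  obtain ⟨K₀, hK₀⟩ := hs.exists_bound_of_continuousOn hχ.continuous.continuousOn
  obtain ⟨K₁, hK₁⟩ := hs.exists_bound_of_continuousOn (hχ.continuous_deriv le_rfl).continuousOn
  exact ⟨max 1 (max K₀ K₁), by positivity,
    fun y hy => (hK₀ y hy).trans (le_max_of_le_right (le_max_left _ _)),
    fun y hy => (hK₁ y hy).trans (le_max_of_le_right (le_max_right _ _))⟩

theorem exists_rightWing_estimate (α : ℝ) (hβ : 0 < β) {χ : ℝ → ℝ} (hχ : ContDiff ℝ 1 χ) {ε : ℝ}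
    (hε : 0 < ε) :
    ∃ C > 0, ∀ (u : ℝ × ℝ → ℝ) (L : ℝ), 1 ≤ L → (∀ p ∈ rightWing α β, ContDiffAt ℝ 2 u p) →
      (∀ θ ∈ Icc (-(π / 2)) (π / 2), u (arc α β θ) = 0) →
      L ^ 2 * arcInt α β (fun p n => (p.1 - α) ^ 2 * χ p.2 * pdy u p * nderiv u p n) ≤
        C * L ^ 8 * (∫ p in rightWing α β, u p ^ 2) + ε * (∫ p in rightWing α β, pdx u p ^ 2) +
          C * ∫ p in rightWing α β, (lap u p - L ^ 2 * u p) ^ 2 := by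
  obtain ⟨K, hKpos, hK, hK'⟩ := exists_pos_bound_with_deriv hχ (isCompact_Icc (a := -β) (b := β))
  let A : ℝ := 4 * K ^ 2 / ε + K + β ^ 2 * K ^ 2
  let B : ℝ := 4 + 2 * β ^ 2 + β ^ 4
  refine ⟨A * B + K * β ^ 2 + A + 1, by positivity, fun u L hL hu h0 => ?_⟩
  have hA : 0 ≤ A := by positivity
  have hrellich := rellich_estimate_rightWing hβ hχ hK hK' hε hL hu h0
  have henergy :=
    mul_le_mul_of_nonneg_left (weighted_energy_estimate_rightWing hβ.le hL hu h0) hA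
  have hU : 0 ≤ (A + 1) * (L ^ 8 * ∫ p in rightWing α β, u p ^ 2) :=
    mul_nonneg (by positivity) (mul_nonneg (by positivity) (integral_nonneg fun _ => sq_nonneg _))
  have hf : 0 ≤ (A * B + K * β ^ 2) * ∫ p in rightWing α β, (lap u p - L ^ 2 * u p) ^ 2 :=
    mul_nonneg (by positivity) (integral_nonneg fun _ => sq_nonneg _)
  linarith

end RightWingEstimate

section Reflection

variable {α β : ℝ}

/-- The reflection `(x, y) ↦ (-x, y)`, which exchanges the two wings. -/
def reflectX (p : ℝ × ℝ) : ℝ × ℝ := (-p.1, p.2)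

lemma reflectX_involutive : Function.Involutive reflectX := fun p => by simp [reflectX]

@[fun_prop]
lemma contDiff_reflectX {n : WithTop ℕ∞} : ContDiff ℝ n reflectX :=
  contDiff_fst.neg.prodMk contDiff_snd

@[fun_prop]
lemma continuous_reflectX : Continuous reflectX := contDiff_reflectX.continuous (n := 0)

lemma setIntegral_preimage_reflectX (g : ℝ × ℝ → ℝ) (s : Set (ℝ × ℝ)) :
    ∫ p in reflectX ⁻¹' s, g p = ∫ p in s, g (reflectX p) := by
  have hpres : MeasurePreserving reflectX volume volume := by
    rw [Measure.volume_eq_prod]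
    exact (Measure.measurePreserving_neg volume).prod (.id volume)
  have hemb : MeasurableEmbedding reflectX :=
    (MeasurableEquiv.ofInvolutive reflectX reflectX_involutive
      continuous_reflectX.measurable).measurableEmbedding
  simpa only [reflectX_involutive _] using
    hpres.setIntegral_preimage_emb hemb (fun p => g (reflectX p)) s

lemma pdx_comp_reflectX (u : ℝ × ℝ → ℝ) :
    pdx (fun q => u (reflectX q)) = fun q => -pdx u (reflectX q) :=
  funext fun p => deriv_comp_neg (fun t => u (t, p.2)) p.1

lemma pdy_comp_reflectX (u : ℝ × ℝ → ℝ) :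
    pdy (fun q => u (reflectX q)) = fun q => pdy u (reflectX q) := rfl

lemma lap_comp_reflectX (u : ℝ × ℝ → ℝ) :
    lap (fun q => u (reflectX q)) = fun q => lap u (reflectX q) := by
  have hneg : pdx (fun q => -pdx u (reflectX q)) = fun q => -pdx (fun r => pdx u (reflectX r)) q :=
    funext fun p => deriv.fun_neg (f := fun t => pdx u (reflectX (t, p.2)))
  funext p
  simp only [lap, pdx_comp_reflectX, pdy_comp_reflectX, hneg, neg_neg]

lemma nderiv_comp_reflectX (u : ℝ × ℝ → ℝ) (p n : ℝ × ℝ) :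
    nderiv (fun q => u (reflectX q)) p n = nderiv u (reflectX p) (reflectX n) := by
  rw [nderiv, nderiv, pdx_comp_reflectX, pdy_comp_reflectX, mul_neg]
  exact congrArg (· + _) (neg_mul _ _).symm

lemma wings_eq_union_preimage_reflectX :
    Wings α β = rightWing α β ∪ reflectX ⁻¹' rightWing α β := by
  ext p
  have hsq : (-p.1 - α) ^ 2 = (p.1 + α) ^ 2 := by ring
  simp only [Wings, rightWing, reflectX, mem_union, mem_ofPred_eq, mem_preimage, hsq, le_neg]

lemma rightWing_subset_wings : rightWing α β ⊆ Wings α β := subset_union_left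

lemma reflectX_mem_wings {p : ℝ × ℝ} (hp : p ∈ rightWing α β) : reflectX p ∈ Wings α β := by
  rw [wings_eq_union_preimage_reflectX]
  exact Or.inr (by rwa [mem_preimage, reflectX_involutive])

lemma isCompact_wings (hβ : 0 ≤ β) : IsCompact (Wings α β) := by
  rw [wings_eq_union_preimage_reflectX]
  exact (isCompact_rightWing hβ).union (reflectX_involutive.image_eq_preimage_symm ▸
    (isCompact_rightWing hβ).image continuous_reflectX)

lemma isCompact_stadium (hβ : 0 ≤ β) : IsCompact (Stadium α β) :=
  (isCompact_Icc.prod isCompact_Icc).union (isCompact_wings hβ)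

lemma reflectX_mem_stadium {p : ℝ × ℝ} (hp : p ∈ Stadium α β) : reflectX p ∈ Stadium α β := by
  rcases hp with hp | hp
  · exact Or.inl ⟨⟨neg_le_neg hp.1.2, neg_le.1 hp.1.1⟩, hp.2⟩
  · refine Or.inr ?_
    rw [wings_eq_union_preimage_reflectX] at hp
    exact hp.elim reflectX_mem_wings fun hp => rightWing_subset_wings hp

lemma reflectX_mem_stadiumBoundary {p : ℝ × ℝ} (hp : p ∈ StadiumBoundary α β) :
    reflectX p ∈ StadiumBoundary α β := by
  simpa only [StadiumBoundary, reflectX, mem_union, mem_ofPred_eq, abs_neg] using hp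

lemma setIntegral_wings (hα : 0 < α) (hβ : 0 ≤ β) {g : ℝ × ℝ → ℝ}
    (hg : ContinuousOn g (Wings α β)) :
    ∫ p in Wings α β, g p =
      (∫ p in rightWing α β, g p) + ∫ p in rightWing α β, g (reflectX p) := by
  have hint := hg.integrableOn_compact (μ := volume) (isCompact_wings hβ)
  have hdisj : Disjoint (rightWing α β) (reflectX ⁻¹' rightWing α β) :=
    Set.disjoint_left.2 fun p hp hp' => by
      have : α ≤ -p.1 := hp'.2
      linarith [hp.2]
  rw [wings_eq_union_preimage_reflectX] at hint ⊢
  rw [setIntegral_union hdisj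
    (continuous_reflectX.measurable (isCompact_rightWing hβ).measurableSet)
    (hint.mono_set subset_union_left) (hint.mono_set subset_union_right),
    setIntegral_preimage_reflectX]

lemma bdryIntW_eq_arcInt_add (hβ : 0 ≤ β) {g : ℝ × ℝ → ℝ × ℝ → ℝ}
    (hg : ContinuousOn (fun q : (ℝ × ℝ) × (ℝ × ℝ) => g q.1 q.2) (Wings α β ×ˢ univ)) :
    bdryIntW α β g = arcInt α β g + arcInt α β fun p n => g (reflectX p) (reflectX n) := by
  have hleft : ContinuousOn (fun q : (ℝ × ℝ) × (ℝ × ℝ) => g (reflectX q.1) (reflectX q.2))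
      (rightWing α β ×ˢ univ) :=
    hg.comp (f := fun q : (ℝ × ℝ) × (ℝ × ℝ) => (reflectX q.1, reflectX q.2)) (by fun_prop)
      fun _ hq => ⟨reflectX_mem_wings hq.1, mem_univ _⟩
  rw [← arcInt_add hβ (hg.mono (prod_mono_left rightWing_subset_wings)) hleft]
  rfl

end Reflection

namespace QMDatum

variable {α β : ℝ} (d : QMDatum α β)

lemma contDiffAt_u {p : ℝ × ℝ} (hp : p ∈ Stadium α β) : ContDiffAt ℝ (⊤ : ℕ∞) d.u p := by
  obtain ⟨V, hV, hSV, hu⟩ := d.smooth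
  exact hu.contDiffAt (hV.mem_nhds (hSV hp))

lemma contDiffAt_two_u {p : ℝ × ℝ} (hp : p ∈ Stadium α β) : ContDiffAt ℝ 2 d.u p :=
  (d.contDiffAt_u hp).of_le ENat.LEInfty.out

lemma continuousOn_u : ContinuousOn d.u (Stadium α β) :=
  fun _ hp => (d.contDiffAt_u hp).continuousAt.continuousWithinAt

lemma continuousOn_pdx_u : ContinuousOn (pdx d.u) (Stadium α β) :=
  continuousOn_pdx fun _ hp => (d.contDiffAt_two_u hp).of_le one_le_two

lemma continuousOn_pdy_u : ContinuousOn (pdy d.u) (Stadium α β) :=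
  continuousOn_pdy fun _ hp => (d.contDiffAt_two_u hp).of_le one_le_two

lemma continuousOn_f : ContinuousOn d.f (Stadium α β) :=
  ((continuousOn_lap fun _ hp => d.contDiffAt_two_u hp).sub
    (continuousOn_const.mul d.continuousOn_u)).congr fun p hp => (d.eqn p hp).symm

lemma u_arc_eq_zero (hα : 0 ≤ α) (hβ : 0 ≤ β) {θ : ℝ} (hθ : θ ∈ Icc (-(π / 2)) (π / 2)) :
    d.u (arc α β θ) = 0 := by
  have hcos : 0 ≤ β * cos θ := mul_nonneg hβ (cos_nonneg_of_mem_Icc hθ)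
  have habs : |α + β * cos θ| = α + β * cos θ := abs_of_nonneg (by positivity)
  refine d.dirichlet _ (Or.inr ⟨?_, ?_⟩)
  · simp only [arc, habs]
    linear_combination β ^ 2 * sin_sq_add_cos_sq θ
  · simpa only [arc, habs, le_add_iff_nonneg_right] using hcos

/-- The quasimode obtained by composing with `reflectX`; its restriction to the right wing is the
restriction of `d` to the left wing. -/
def reflect : QMDatum α β where
  u p := d.u (reflectX p)
  lam := d.lam
  f p := d.f (reflectX p)
  lam_pos := d.lam_pos
  smooth := by
    obtain ⟨V, hV, hSV, hu⟩ := d.smooth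
    exact ⟨reflectX ⁻¹' V, hV.preimage continuous_reflectX,
      fun p hp => hSV (reflectX_mem_stadium hp),
      hu.comp contDiff_reflectX.contDiffOn fun _ hp => hp⟩
  dirichlet p hp := d.dirichlet _ (reflectX_mem_stadiumBoundary hp)
  eqn p hp := by rw [lap_comp_reflectX]; exact d.eqn _ (reflectX_mem_stadium hp)

lemma bdryIntW_eq_arcInt_add_reflect (hα : 0 ≤ α) (hβ : 0 ≤ β) {χ : ℝ → ℝ} (hχ : Continuous χ) :
    bdryIntW α β (fun p n => (|p.1| - α) ^ 2 * χ p.2 * pdy d.u p * nderiv d.u p n) =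
      arcInt α β (fun p n => (p.1 - α) ^ 2 * χ p.2 * pdy d.u p * nderiv d.u p n) +
      arcInt α β (fun p n =>
        (p.1 - α) ^ 2 * χ p.2 * pdy d.reflect.u p * nderiv d.reflect.u p n) := by
  have hfst : MapsTo Prod.fst (Wings α β ×ˢ (univ : Set (ℝ × ℝ))) (Stadium α β) :=
    fun _ hq => Or.inr hq.1
  have hcx := d.continuousOn_pdx_u.comp continuousOn_fst hfst
  have hcy := d.continuousOn_pdy_u.comp continuousOn_fst hfst
  have habs {θ : ℝ} (hθ : θ ∈ Icc (-(π / 2)) (π / 2)) :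
      |(arc α β θ).1| = (arc α β θ).1 :=
    abs_of_nonneg (hα.trans (arc_mem_rightWing hβ hθ).2)
  rw [bdryIntW_eq_arcInt_add hβ]
  · congr 1 <;> refine arcInt_congr fun θ hθ => ?_
    · rw [habs hθ]
    · rw [reflect, nderiv_comp_reflectX, pdy_comp_reflectX]
      simp only [reflectX, abs_neg, habs hθ]
  · simp only [Function.comp_def] at hcx hcy
    simp only [nderiv]
    fun_prop

end QMDatum

section StadiumEstimate

variable {α β : ℝ}

lemma exists_rightWing_estimate_qmDatum (hα : 0 ≤ α) (hβ : 0 < β) {χ : ℝ → ℝ}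
    (hχ : ContDiff ℝ 1 χ) {ε : ℝ} (hε : 0 < ε) :
    ∃ C > 0, ∀ d : QMDatum α β, 1 ≤ d.lam →
      d.lam ^ 2 * arcInt α β (fun p n => (p.1 - α) ^ 2 * χ p.2 * pdy d.u p * nderiv d.u p n) ≤
        C * d.lam ^ 8 * (∫ p in rightWing α β, d.u p ^ 2) +
          ε * (∫ p in rightWing α β, pdx d.u p ^ 2) + C * ∫ p in rightWing α β, d.f p ^ 2 := by
  obtain ⟨C, hC, h⟩ := exists_rightWing_estimate α hβ hχ hε
  refine ⟨C, hC, fun d hd => ?_⟩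
  have hsub {p : ℝ × ℝ} (hp : p ∈ rightWing α β) : p ∈ Stadium α β :=
    Or.inr (rightWing_subset_wings hp)
  have hf : ∫ p in rightWing α β, (lap d.u p - d.lam ^ 2 * d.u p) ^ 2 =
      ∫ p in rightWing α β, d.f p ^ 2 :=
    setIntegral_congr_fun (isCompact_rightWing hβ.le).measurableSet fun p hp => by
      simp only [d.eqn p (hsub hp)]
  rw [← hf]
  exact h d.u d.lam hd (fun p hp => d.contDiffAt_two_u (hsub hp))
    fun θ hθ => d.u_arc_eq_zero hα hβ.le hθ

lemma setIntegral_sq_wings_le_stadium (hβ : 0 ≤ β) {g : ℝ × ℝ → ℝ}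
    (hg : ContinuousOn g (Stadium α β)) :
    ∫ p in Wings α β, g p ^ 2 ≤ ∫ p in Stadium α β, g p ^ 2 :=
  setIntegral_mono_set ((hg.pow 2).integrableOn_compact (isCompact_stadium hβ))
    (.of_forall fun _ => sq_nonneg _) subset_union_right.eventuallyLE

theorem stmt15_general (hα : 0 < α) (hβ : 0 < β) {χ : ℝ → ℝ} (hχ : ContDiff ℝ 1 χ) {ε : ℝ}
    (hε : 0 < ε) :
    ∃ C > 0, ∀ d : QMDatum α β, 1 ≤ d.lam →
      d.lam ^ 2 *
        bdryIntW α β (fun p n => (|p.1| - α) ^ 2 * χ p.2 * pdy d.u p * nderiv d.u p n) ≤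
        C * d.lam ^ 8 * (∫ p in Wings α β, d.u p ^ 2) +
          ε * (∫ p in Wings α β, pdx d.u p ^ 2) + C * ∫ p in Wings α β, d.f p ^ 2 := by
  obtain ⟨C, hC, h⟩ := exists_rightWing_estimate_qmDatum hα.le hβ hχ hε
  refine ⟨C, hC, fun d hd => ?_⟩
  have hright := h d hd
  have hleft := h d.reflect hd
  have hsplit {g : ℝ × ℝ → ℝ} (hg : ContinuousOn g (Stadium α β)) :
      ∫ p in Wings α β, g p ^ 2 =
        (∫ p in rightWing α β, g p ^ 2) + ∫ p in rightWing α β, g (reflectX p) ^ 2 :=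
    setIntegral_wings hα hβ.le ((hg.pow 2).mono subset_union_right)
  rw [d.bdryIntW_eq_arcInt_add_reflect hα.le hβ.le hχ.continuous, hsplit d.continuousOn_u,
    hsplit d.continuousOn_pdx_u, hsplit d.continuousOn_f]
  simp only [QMDatum.reflect, pdx_comp_reflectX, neg_sq] at hleft ⊢
  linarith

end StadiumEstimate

/-- Region II estimate, first version: for `χ` smooth, supported in
`{|y| > β/20}`, equal to `-1` for `y ≤ -β/10` and `1` for `y ≥ β/10`, and every `ε > 0`,
there are `C > 0` and `λ₀ > 0` such that every real Dirichlet quasimode datum with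
`λ ≥ λ₀` satisfies
`λ² ∫_{∂S ∩ W} w² χ(y)(∂_y u)(∂_N u) dl ≤ C λ⁸ ‖u‖²_{L²(W)} + ε ∫_S (∂_x u)² + C ‖f‖²`. -/
theorem stmt15 (α β : ℝ) (hα : 0 < α) (hβ : 0 < β)
    (χ : ℝ → ℝ) (hχ : ContDiff ℝ (⊤ : ℕ∞) χ)
    (hχsupp : Function.support χ ⊆ {y : ℝ | β / 20 < |y|})
    (hχm : ∀ y, y ≤ -(β / 10) → χ y = -1)
    (hχp : ∀ y, β / 10 ≤ y → χ y = 1) :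
    ∀ ε > 0, ∃ C > 0, ∃ lam₀ > 0, ∀ d : QMDatum α β, d.lam ≥ lam₀ →
      d.lam ^ 2 *
        bdryIntW α β (fun p n => (|p.1| - α) ^ 2 * χ p.2 * pdy d.u p * nderiv d.u p n) ≤
        C * d.lam ^ 8 * (∫ p in Wings α β, (d.u p) ^ 2) +
        ε * (∫ p in Stadium α β, (pdx d.u p) ^ 2) +
        C * (∫ p in Stadium α β, (d.f p) ^ 2) := by
  intro ε hε
  obtain ⟨C, hC, h⟩ := stmt15_general hα hβ (hχ.of_le (by simp)) hε
  refine ⟨C, hC, 1, one_pos, fun d hd => (h d hd).trans ?_⟩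
  have hux := setIntegral_sq_wings_le_stadium hβ.le d.continuousOn_pdx_u
  have hf := setIntegral_sq_wings_le_stadium hβ.le d.continuousOn_f
  gcongr
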